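/- arXiv:2512.05054 — 2 statements merged into one kernel-verified Lean document; each statement's English description precedes it below -/
import Mathlib

section
/- Assume (H1) and the quantitative form of (H3): there exist c₄ with c₄ > 1/(c₁²·α₂) and x₀ > 0 such that f(x,y) ≥ c₄·x for all x ≥ x₀ and all |y| ≤ R. Then there exists σ₀ > 0 such that for every u ∈ K₁ with |u|_∞ = 1, every v ∈ C([0,1],ℝ) with |v|_∞ ≤ R, and every σ ≥ σ₀, one has 𝓕(T₁(σu, v), σu) > 0. In particular, any σ > 0 satisfying 𝓕(T₁(σu, v), σu) = 0 satisfies σ < σ₀. -/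
/-!
STATEMENT 13: Assume (H1) and the quantitative form of (H3): there exist c₄ with
c₄ > 1/(c₁²·α₂) and x₀ > 0 such that f(x,y) ≥ c₄·x for all x ≥ x₀ and all |y| ≤ R.
Then there exists σ₀ > 0 such that for every u ∈ K₁ with |u|_∞ = 1, every
v ∈ C([0,1],ℝ) with |v|_∞ ≤ R, and every σ ≥ σ₀, one has 𝓕(T₁(σu, v), σu) > 0.
In particular, any σ > 0 with 𝓕(T₁(σu, v), σu) = 0 satisfies σ < σ₀.

Here 𝓕(ũ, u) = ∫₀¹ (ũ(t) − u(t))·u(t) dt and T₁(u,v)(t) = ∫₀¹ k₁(t,θ) f(u(θ),v(θ)) dθ.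
Elements of C([0,1],ℝ) are modelled as functions ℝ → ℝ that are continuous on [0,1].
-/

/-- The sup norm on `[0,1]`: `|u|_∞ = max_{t ∈ [0,1]} |u t|`. -/
noncomputable def supNorm (u : ℝ → ℝ) : ℝ :=
  sSup ((fun t => |u t|) '' Set.Icc (0:ℝ) 1)

/-- Membership in the cone
`K₁ = {u ∈ C([0,1],ℝ) : u ≥ 0 and min_{t∈[a,b]} u(t) ≥ c₁ |u|_∞}`. -/
def memK₁ (a b c₁ : ℝ) (u : ℝ → ℝ) : Prop :=
  ContinuousOn u (Set.Icc 0 1) ∧ (∀ t ∈ Set.Icc (0:ℝ) 1, 0 ≤ u t) ∧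
    ∀ t ∈ Set.Icc a b, c₁ * supNorm u ≤ u t

/-- The value `𝓕(T₁(σu,v), σu)` where `𝓕(ũ,u) = ∫₀¹ (ũ(t) − u(t))·u(t) dt` and
`T₁(u,v)(t) = ∫₀¹ k₁(t,θ) f(u(θ),v(θ)) dθ`. -/
noncomputable def nehariF (k₁ : ℝ → ℝ → ℝ) (f : ℝ → ℝ → ℝ) (u v : ℝ → ℝ) (σ : ℝ) : ℝ :=
  ∫ t in (0:ℝ)..1,
    ((∫ θ in (0:ℝ)..1, k₁ t θ * f (σ * u θ) (v θ)) - σ * u t) * (σ * u t)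


theorem param_cont (G : ℝ → ℝ → ℝ)
    (hG : ContinuousOn (fun p : ℝ × ℝ => G p.1 p.2) (Set.Icc 0 1 ×ˢ Set.Icc 0 1))
    (a b : ℝ) (ha : 0 ≤ a) (hab : a ≤ b) (hb : b ≤ 1) :
    ContinuousOn (fun t => ∫ θ in a..b, G t θ) (Set.Icc 0 1) := by
  have h01 : (0:ℝ) ≤ 1 := zero_le_one
  let p : ℝ → ℝ := fun t => (Set.projIcc (0:ℝ) 1 h01 t : ℝ)
  have hp : Continuous p := continuous_subtype_val.comp continuous_projIcc
  have hpm : ∀ t, p t ∈ Set.Icc (0:ℝ) 1 := fun t => (Set.projIcc (0:ℝ) 1 h01 t).2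
  have hpe : ∀ t ∈ Set.Icc (0:ℝ) 1, p t = t := fun t ht => by
    simp only [p, Set.projIcc_of_mem h01 ht]
  have hc : Continuous (Function.uncurry fun t θ => G (p t) (p θ)) := by
    have : Continuous (fun q : ℝ × ℝ => (p q.1, p q.2)) := by fun_prop
    exact hG.comp_continuous this (fun q => ⟨hpm _, hpm _⟩)
  have h := intervalIntegral.continuous_parametric_intervalIntegral_of_continuous' (μ := MeasureTheory.volume) hc a b
  refine h.continuousOn.congr ?_
  intro t ht
  refine intervalIntegral.integral_congr ?_
  intro θ hθ
  rw [Set.uIcc_of_le hab] at hθ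
  simp only [hpe t ht, hpe θ ⟨ha.trans hθ.1, hθ.2.trans hb⟩]

theorem pos_of_large (k₁ : ℝ → ℝ → ℝ)
    (hk₁cont : ContinuousOn (fun p : ℝ × ℝ => k₁ p.1 p.2)
      (Set.Icc 0 1 ×ˢ Set.Icc 0 1))
    (hk₁nonneg : ∀ t ∈ Set.Icc (0:ℝ) 1, ∀ θ ∈ Set.Icc (0:ℝ) 1, 0 ≤ k₁ t θ)
    (f : ℝ → ℝ → ℝ) (hfcont : Continuous (fun p : ℝ × ℝ => f p.1 p.2))
    (hfnonneg : ∀ x : ℝ, 0 ≤ x → ∀ y : ℝ, 0 ≤ f x y)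
    (R : ℝ)
    (a b : ℝ) (ha : 0 ≤ a) (hab : a ≤ b) (hb : b ≤ 1)
    (c₁ : ℝ) (hc₁pos : 0 < c₁)
    (α₂ : ℝ) (hα₂ : α₂ = ∫ t in a..b, ∫ θ in a..b, k₁ t θ) (hα₂pos : 0 < α₂)
    (c₄ : ℝ) (hc₄ : 1 / (c₁ ^ 2 * α₂) < c₄)
    (x₀ : ℝ) (hx₀ : 0 < x₀)
    (hH3 : ∀ x : ℝ, x₀ ≤ x → ∀ y : ℝ, |y| ≤ R → c₄ * x ≤ f x y)
    (u v : ℝ → ℝ) (hu : memK₁ a b c₁ u) (hu1 : supNorm u = 1)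
    (hv : ContinuousOn v (Set.Icc 0 1)) (hvR : ∀ t ∈ Set.Icc (0:ℝ) 1, |v t| ≤ R)
    (σ : ℝ) (hσ : x₀ / c₁ ≤ σ) : 0 < nehariF k₁ f u v σ := by
  obtain ⟨huc, hu0, hul⟩ := hu
  rw [hu1, mul_one] at hul
  have h01 : (0:ℝ) ≤ 1 := zero_le_one
  have hσpos : 0 < σ := (div_pos hx₀ hc₁pos).trans_le hσ
  have hσx : x₀ ≤ σ * c₁ := (div_le_iff₀ hc₁pos).1 hσ
  have hc₄pos : 0 < c₄ := lt_trans (by positivity) hc₄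
  have hsub : Set.Icc a b ⊆ Set.Icc (0:ℝ) 1 := Set.Icc_subset_Icc ha hb
  have hule : ∀ t ∈ Set.Icc (0:ℝ) 1, u t ≤ 1 := by
    intro t ht
    rw [← hu1]
    refine (le_abs_self _).trans (le_csSup ?_ ⟨t, ht, rfl⟩)
    exact (isCompact_Icc.image_of_continuousOn huc.abs).bddAbove
  have hfc : ContinuousOn (fun θ => f (σ * u θ) (v θ)) (Set.Icc 0 1) :=
    hfcont.comp_continuousOn ((continuousOn_const.mul huc).prodMk hv)
  have hGc : ContinuousOn (fun p : ℝ × ℝ => k₁ p.1 p.2 * f (σ * u p.2) (v p.2))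
      (Set.Icc 0 1 ×ˢ Set.Icc 0 1) :=
    hk₁cont.mul (hfc.comp continuousOn_snd (fun p hp => hp.2))
  have hTc := param_cont (fun t θ => k₁ t θ * f (σ * u θ) (v θ)) hGc 0 1 le_rfl h01 le_rfl
  have hSc := param_cont k₁ hk₁cont a b ha hab hb
  have hσu : ContinuousOn (fun t => σ * u t) (Set.Icc 0 1) := continuousOn_const.mul huc
  have sec : ∀ (G : ℝ → ℝ → ℝ), ContinuousOn (fun p : ℝ × ℝ => G p.1 p.2)
      (Set.Icc 0 1 ×ˢ Set.Icc 0 1) → ∀ t ∈ Set.Icc (0:ℝ) 1, ContinuousOn (G t) (Set.Icc 0 1) := by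
    intro G hG t ht
    exact hG.comp (f := fun θ : ℝ => (t, θ)) (by fun_prop) (fun θ hθ => ⟨ht, hθ⟩)
  have hG0 : ∀ t ∈ Set.Icc (0:ℝ) 1, ∀ θ ∈ Set.Icc (0:ℝ) 1,
      0 ≤ k₁ t θ * f (σ * u θ) (v θ) := fun t ht θ hθ =>
    mul_nonneg (hk₁nonneg t ht θ hθ) (hfnonneg _ (mul_nonneg hσpos.le (hu0 θ hθ)) _)
  have mono : ∀ g : ℝ → ℝ, ContinuousOn g (Set.Icc 0 1) → (∀ t ∈ Set.Icc (0:ℝ) 1, 0 ≤ g t) →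
      ∫ t in a..b, g t ≤ ∫ t in (0:ℝ)..1, g t := by
    intro g hg hg0
    refine intervalIntegral.integral_mono_interval ha hab hb ?_ (hg.intervalIntegrable_of_Icc h01)
    filter_upwards [MeasureTheory.ae_restrict_mem measurableSet_Ioc] with t ht
    exact hg0 t (Set.Ioc_subset_Icc_self ht)
  set T : ℝ → ℝ := fun t => ∫ θ in (0:ℝ)..1, k₁ t θ * f (σ * u θ) (v θ) with hT
  have hT0 : ∀ t ∈ Set.Icc (0:ℝ) 1, 0 ≤ T t := fun t ht =>
    intervalIntegral.integral_nonneg h01 (hG0 t ht)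
  have hTl : ∀ t ∈ Set.Icc a b, (c₄ * (σ * c₁)) * (∫ θ in a..b, k₁ t θ) ≤ T t := by
    intro t ht
    have ht' := hsub ht
    refine le_trans ?_ (mono _ (sec (fun t θ => k₁ t θ * f (σ * u θ) (v θ)) hGc t ht') (hG0 t ht'))
    rw [← intervalIntegral.integral_const_mul]
    refine intervalIntegral.integral_mono_on hab ?_ ?_ ?_
    · exact (continuousOn_const.mul ((sec _ hk₁cont t ht').mono hsub)).intervalIntegrable_of_Icc hab
    · exact ((sec (fun t θ => k₁ t θ * f (σ * u θ) (v θ)) hGc t ht').mono hsub).intervalIntegrable_of_Icc hab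
    · intro θ hθ
      have h1 : σ * c₁ ≤ σ * u θ := mul_le_mul_of_nonneg_left (hul θ hθ) hσpos.le
      have h2 := hH3 (σ * u θ) (hσx.trans h1) (v θ) (hvR θ (hsub hθ))
      have h3 : c₄ * (σ * c₁) ≤ f (σ * u θ) (v θ) :=
        (mul_le_mul_of_nonneg_left h1 hc₄pos.le).trans h2
      rw [mul_comm]
      exact mul_le_mul_of_nonneg_left h3 (hk₁nonneg t ht' θ (hsub hθ))
  have hA : (σ * c₁) * (c₄ * (σ * c₁)) * α₂ ≤ ∫ t in (0:ℝ)..1, T t * (σ * u t) := by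
    refine le_trans ?_ (mono _ (hTc.mul hσu)
      (fun t ht => mul_nonneg (hT0 t ht) (mul_nonneg hσpos.le (hu0 t ht))))
    rw [hα₂, ← intervalIntegral.integral_const_mul]
    refine intervalIntegral.integral_mono_on hab ?_ ?_ ?_
    · exact (continuousOn_const.mul (hSc.mono hsub)).intervalIntegrable_of_Icc hab
    · exact ((hTc.mul hσu).mono hsub).intervalIntegrable_of_Icc hab
    · intro t ht
      have h1 : σ * c₁ ≤ σ * u t := mul_le_mul_of_nonneg_left (hul t ht) hσpos.le
      have h2 := mul_le_mul (hTl t ht) h1 (by positivity) (hT0 t (hsub ht))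
      calc _ = _ := by ring
        _ ≤ _ := h2
  have hB : ∫ t in (0:ℝ)..1, (σ * u t) * (σ * u t) ≤ σ ^ 2 := by
    have : ∫ t in (0:ℝ)..1, (σ * u t) * (σ * u t) ≤ ∫ t in (0:ℝ)..1, σ ^ 2 := by
      refine intervalIntegral.integral_mono_on h01
        ((hσu.mul hσu).intervalIntegrable_of_Icc h01) (by simp) ?_
      intro t ht
      have h1 : σ * u t ≤ σ := mul_le_of_le_one_right hσpos.le (hule t ht)
      have h0 : 0 ≤ σ * u t := mul_nonneg hσpos.le (hu0 t ht)
      nlinarith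
    simpa using this
  have hE : nehariF k₁ f u v σ =
      (∫ t in (0:ℝ)..1, T t * (σ * u t)) - ∫ t in (0:ℝ)..1, (σ * u t) * (σ * u t) := by
    have hI1 : IntervalIntegrable (fun t => T t * (σ * u t)) MeasureTheory.volume 0 1 :=
      (hTc.mul hσu).intervalIntegrable_of_Icc h01
    have hI2 : IntervalIntegrable (fun t => (σ * u t) * (σ * u t)) MeasureTheory.volume 0 1 :=
      (hσu.mul hσu).intervalIntegrable_of_Icc h01
    rw [← intervalIntegral.integral_sub hI1 hI2]
    unfold nehariF
    simp only [sub_mul, hT]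
  have hC : 1 < c₄ * (c₁ ^ 2 * α₂) := (div_lt_iff₀ (by positivity)).1 hc₄
  have hD : σ ^ 2 < (σ * c₁) * (c₄ * (σ * c₁)) * α₂ := by
    calc σ ^ 2 = σ ^ 2 * 1 := by ring
      _ < σ ^ 2 * (c₄ * (c₁ ^ 2 * α₂)) := mul_lt_mul_of_pos_left hC (by positivity)
      _ = _ := by ring
  rw [hE]
  linarith

theorem F_pos_for_large_sigma
    -- k₁ is a nonnegative continuous function on [0,1]²
    (k₁ : ℝ → ℝ → ℝ)
    (hk₁cont : ContinuousOn (fun p : ℝ × ℝ => k₁ p.1 p.2)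
      (Set.Icc 0 1 ×ˢ Set.Icc 0 1))
    (hk₁nonneg : ∀ t ∈ Set.Icc (0:ℝ) 1, ∀ θ ∈ Set.Icc (0:ℝ) 1, 0 ≤ k₁ t θ)
    -- f is continuous with f(x,y) ≥ 0 for x ≥ 0
    (f : ℝ → ℝ → ℝ) (hfcont : Continuous (fun p : ℝ × ℝ => f p.1 p.2))
    (hfnonneg : ∀ x : ℝ, 0 ≤ x → ∀ y : ℝ, 0 ≤ f x y)
    (R : ℝ) (hR : 0 < R)
    -- condition (H1)
    (Φ : ℝ → ℝ) (hΦcont : ContinuousOn Φ (Set.Icc 0 1))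
    (hΦnonneg : ∀ θ ∈ Set.Icc (0:ℝ) 1, 0 ≤ Φ θ)
    (a b : ℝ) (ha : 0 ≤ a) (hab : a ≤ b) (hb : b ≤ 1)
    (c₁ : ℝ) (hc₁pos : 0 < c₁) (hc₁le : c₁ ≤ 1)
    (hk₁upper : ∀ t ∈ Set.Icc (0:ℝ) 1, ∀ θ ∈ Set.Icc (0:ℝ) 1, k₁ t θ ≤ Φ θ)
    (hk₁lower : ∀ t ∈ Set.Icc a b, ∀ θ ∈ Set.Icc (0:ℝ) 1, c₁ * Φ θ ≤ k₁ t θ)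
    -- α₂ := ∫ₐᵇ∫ₐᵇ k₁(t,θ) dθ dt, with α₂ > 0
    (α₂ : ℝ) (hα₂ : α₂ = ∫ t in a..b, ∫ θ in a..b, k₁ t θ) (hα₂pos : 0 < α₂)
    -- quantitative form of (H3)
    (c₄ : ℝ) (hc₄ : 1 / (c₁ ^ 2 * α₂) < c₄)
    (x₀ : ℝ) (hx₀ : 0 < x₀)
    (hH3 : ∀ x : ℝ, x₀ ≤ x → ∀ y : ℝ, |y| ≤ R → c₄ * x ≤ f x y) :
    ∃ σ₀ : ℝ, 0 < σ₀ ∧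
      ∀ u v : ℝ → ℝ, memK₁ a b c₁ u → supNorm u = 1 →
        ContinuousOn v (Set.Icc 0 1) → (∀ t ∈ Set.Icc (0:ℝ) 1, |v t| ≤ R) →
        (∀ σ : ℝ, σ₀ ≤ σ → 0 < nehariF k₁ f u v σ) ∧
          (∀ σ : ℝ, 0 < σ → nehariF k₁ f u v σ = 0 → σ < σ₀) := by
  have key := fun (u v : ℝ → ℝ) (hu : memK₁ a b c₁ u) (hu1 : supNorm u = 1)
      (hv : ContinuousOn v (Set.Icc 0 1)) (hvR : ∀ t ∈ Set.Icc (0:ℝ) 1, |v t| ≤ R) =>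
    pos_of_large k₁ hk₁cont hk₁nonneg f hfcont hfnonneg R a b ha hab hb c₁ hc₁pos α₂ hα₂ hα₂pos
      c₄ hc₄ x₀ hx₀ hH3 u v hu hu1 hv hvR
  refine ⟨x₀ / c₁, div_pos hx₀ hc₁pos, fun u v hu hu1 hv hvR => ⟨key u v hu hu1 hv hvR, ?_⟩⟩
  intro σ _ h0
  by_contra hlt
  exact (key u v hu hu1 hv hvR σ (not_lt.1 hlt)).ne' h0
end

section
/- Assume (H1) with α₁ > 0 and α₂ > 0, the quantitative forms of (H2) and (H3), and condition (H4): for each y with |y| ≤ R, the map x ↦ f(x,y)/x is strictly increasing on (0,∞). Then for every u ∈ K₁ \ {0} and every v ∈ C([0,1],ℝ) with |v|_∞ ≤ R, there exists a unique σ* > 0 such that 𝓕(T₁(σ*·u, v), σ*·u) = 0. -/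
theorem core_sigma (K : ℝ → ℝ → ℝ) (hK : Continuous (fun p : ℝ × ℝ => K p.1 p.2))
    (K0 : ∀ t θ, 0 ≤ K t θ) (α₁ : ℝ) (hα₁pos : 0 < α₁) (K1 : ∀ t θ, K t θ ≤ α₁)
    (f : ℝ → ℝ → ℝ) (hfcont : Continuous (fun p : ℝ × ℝ => f p.1 p.2))
    (hfnonneg : ∀ x : ℝ, 0 ≤ x → ∀ y : ℝ, 0 ≤ f x y) (R : ℝ)
    (a b : ℝ) (ha : 0 ≤ a) (hab : a ≤ b) (hb : b ≤ 1)
    (c₁ : ℝ) (hc₁pos : 0 < c₁)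
    (α₂ : ℝ) (hα₂ : α₂ = ∫ t in a..b, ∫ θ in a..b, K t θ) (hα₂pos : 0 < α₂)
    (c₂ : ℝ) (hc₂pos : 0 < c₂) (hc₂lt : c₂ < 1 / α₁)
    (δ₀ : ℝ) (hδ₀ : 0 < δ₀)
    (hH2 : ∀ x : ℝ, 0 ≤ x → x ≤ δ₀ → ∀ y : ℝ, |y| ≤ R → f x y ≤ c₂ * x)
    (c₄ : ℝ) (hc₄ : 1 / (c₁ ^ 2 * α₂) < c₄)
    (x₀ : ℝ) (hx₀ : 0 < x₀)
    (hH3 : ∀ x : ℝ, x₀ ≤ x → ∀ y : ℝ, |y| ≤ R → c₄ * x ≤ f x y)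
    (hH4 : ∀ y : ℝ, |y| ≤ R → StrictMonoOn (fun x => f x y / x) (Set.Ioi (0:ℝ)))
    (U V : ℝ → ℝ) (hU : Continuous U) (hV : Continuous V) (U0 : ∀ t, 0 ≤ U t)
    (M : ℝ) (hM : 0 < M) (UM : ∀ t, U t ≤ M) (Ul : ∀ t ∈ Set.Icc a b, c₁ * M ≤ U t)
    (VR : ∀ t, |V t| ≤ R) :
    ∃! σ : ℝ, 0 < σ ∧ nehariF K f U V σ = 0 := by
  have h01 : (0:ℝ) ≤ 1 := zero_le_one
  have hKf : Continuous (fun q : (ℝ × ℝ) × ℝ => K q.1.2 q.2 * f (q.1.1 * U q.2) (V q.2)) := by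
    have h1 : Continuous (fun q : (ℝ × ℝ) × ℝ => K q.1.2 q.2) :=
      hK.comp (f := fun q : (ℝ × ℝ) × ℝ => (q.1.2, q.2)) (by fun_prop)
    have h2 : Continuous (fun q : (ℝ × ℝ) × ℝ => f (q.1.1 * U q.2) (V q.2)) :=
      hfcont.comp (f := fun q : (ℝ × ℝ) × ℝ => (q.1.1 * U q.2, V q.2)) (by fun_prop)
    exact h1.mul h2
  have hKft : ∀ σ t, Continuous (fun θ => K t θ * f (σ * U θ) (V θ)) := fun σ t =>
    hKf.comp (f := fun θ : ℝ => ((σ, t), θ)) (by fun_prop)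
  have hKt : ∀ t, Continuous (fun θ => K t θ) := fun t =>
    hK.comp (f := fun θ : ℝ => (t, θ)) (by fun_prop)
  obtain ⟨J, hJ⟩ : ∃ J : ℝ → ℝ → ℝ, J = fun σ t => ∫ θ in (0:ℝ)..1, K t θ * f (σ * U θ) (V θ) :=
    ⟨_, rfl⟩
  have hJc : Continuous (fun p : ℝ × ℝ => J p.1 p.2) := by
    rw [hJ]
    exact intervalIntegral.continuous_parametric_intervalIntegral_of_continuous'
      (f := fun (p : ℝ × ℝ) θ => K p.2 θ * f (p.1 * U θ) (V θ)) hKf 0 1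
  have hJt : ∀ σ, Continuous (J σ) := fun σ =>
    hJc.comp (f := fun t : ℝ => (σ, t)) (by fun_prop)
  have hJ0 : ∀ σ, 0 ≤ σ → ∀ t, 0 ≤ J σ t := by
    intro σ hσ t
    rw [hJ]
    exact intervalIntegral.integral_nonneg h01 fun θ _ =>
      mul_nonneg (K0 _ _) (hfnonneg _ (mul_nonneg hσ (U0 _)) _)
  obtain ⟨S, hS⟩ : ∃ S : ℝ, S = ∫ t in (0:ℝ)..1, U t ^ 2 := ⟨_, rfl⟩
  obtain ⟨P, hP⟩ : ∃ P : ℝ → ℝ, P = fun σ => (∫ t in (0:ℝ)..1, J σ t * U t) - σ * S := ⟨_, rfl⟩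
  have hPc : Continuous P := by
    rw [hP]
    have := intervalIntegral.continuous_parametric_intervalIntegral_of_continuous'
      (μ := MeasureTheory.volume)
      (f := fun (σ : ℝ) t => J σ t * U t)
      (hJc.mul (hU.comp continuous_snd)) 0 1
    fun_prop
  have hN : ∀ σ, nehariF K f U V σ = σ * P σ := by
    intro σ
    have e : nehariF K f U V σ = ∫ t in (0:ℝ)..1, (σ * (J σ t * U t) - σ * (σ * U t ^ 2)) := by
      unfold nehariF
      rw [hJ]
      congr 1
      ext t
      ring
    have i1 := hJt σ
    rw [e, intervalIntegral.integral_sub (Continuous.intervalIntegrable (by fun_prop) _ _)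
      (Continuous.intervalIntegrable (by fun_prop) _ _)]
    simp only [intervalIntegral.integral_const_mul]
    rw [hP, hS]
    ring
  have hSpos : 0 < S := by
    rw [hS]
    refine intervalIntegral.integral_pos one_pos (by fun_prop) (fun x _ => sq_nonneg _)
      ⟨a, ⟨ha, hab.trans hb⟩, ?_⟩
    have := Ul a ⟨le_rfl, hab⟩
    have : 0 < c₁ * M := mul_pos hc₁pos hM
    have : 0 < U a := by linarith
    positivity
  have hSM : S ≤ M ^ 2 := by
    have : S ≤ ∫ t in (0:ℝ)..1, M ^ 2 := by
      rw [hS]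
      refine intervalIntegral.integral_mono_on h01
        (Continuous.intervalIntegrable (by fun_prop) _ _)
        (Continuous.intervalIntegrable (by fun_prop) _ _) fun t _ => ?_
      exact pow_le_pow_left₀ (U0 t) (UM t) 2
    simpa using this
  -- the mean of U
  obtain ⟨A, hA⟩ : ∃ A : ℝ, A = ∫ t in (0:ℝ)..1, U t := ⟨_, rfl⟩
  have hAS : A ^ 2 ≤ S := by
    have h : 0 ≤ ∫ t in (0:ℝ)..1, (U t - A) ^ 2 :=
      intervalIntegral.integral_nonneg h01 fun t _ => sq_nonneg _
    have e : ∫ t in (0:ℝ)..1, (U t - A) ^ 2 = ∫ t in (0:ℝ)..1, (U t ^ 2 - 2 * A * U t + A ^ 2) := by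
      congr 1
      ext t
      ring
    rw [e, intervalIntegral.integral_add (Continuous.intervalIntegrable (by fun_prop) _ _)
      (Continuous.intervalIntegrable (by fun_prop) _ _),
      intervalIntegral.integral_sub (Continuous.intervalIntegrable (by fun_prop) _ _)
      (Continuous.intervalIntegrable (by fun_prop) _ _),
      intervalIntegral.integral_const_mul, ← hA, ← hS] at h
    simp at h
    nlinarith
  -- negativity for a small parameter
  have hneg : P (δ₀ / M) < 0 := by
    have hs : 0 < δ₀ / M := div_pos hδ₀ hM
    have hsM : δ₀ / M * M = δ₀ := by field_simp
    generalize δ₀ / M = s at hs hsM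
    have hJle : ∀ t, J s t ≤ α₁ * (c₂ * s) * A := by
      intro t
      have : J s t ≤ ∫ θ in (0:ℝ)..1, α₁ * (c₂ * s) * U θ := by
        rw [hJ]
        refine intervalIntegral.integral_mono_on h01 ((hKft s t).intervalIntegrable _ _)
          (Continuous.intervalIntegrable (by fun_prop) _ _) fun θ _ => ?_
        have h1 : 0 ≤ s * U θ := mul_nonneg hs.le (U0 _)
        have h2 : s * U θ ≤ δ₀ := by
          rw [← hsM]; exact mul_le_mul_of_nonneg_left (UM _) hs.le
        calc K t θ * f (s * U θ) (V θ) ≤ α₁ * (c₂ * (s * U θ)) :=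
              mul_le_mul (K1 _ _) (hH2 _ h1 h2 _ (VR _)) (hfnonneg _ h1 _) hα₁pos.le
          _ = _ := by ring
      rwa [intervalIntegral.integral_const_mul, ← hA] at this
    have hI : ∫ t in (0:ℝ)..1, J s t * U t ≤ α₁ * (c₂ * s) * A * A := by
      have : ∫ t in (0:ℝ)..1, J s t * U t ≤ ∫ t in (0:ℝ)..1, α₁ * (c₂ * s) * A * U t := by
        refine intervalIntegral.integral_mono_on h01
          (Continuous.intervalIntegrable ((hJt s).mul hU) _ _)
          (Continuous.intervalIntegrable (by fun_prop) _ _) fun θ _ => ?_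
        exact mul_le_mul_of_nonneg_right (hJle _) (U0 _)
      rwa [intervalIntegral.integral_const_mul, ← hA] at this
    have hc : α₁ * c₂ < 1 := by
      rw [lt_div_iff₀ hα₁pos] at hc₂lt
      linarith
    rw [hP]
    have h1 : α₁ * (c₂ * s) * A * A ≤ α₁ * (c₂ * s) * S := by
      have : 0 ≤ α₁ * (c₂ * s) := by positivity
      nlinarith
    have h2 : 0 < (1 - α₁ * c₂) * (s * S) := mul_pos (by linarith) (mul_pos hs hSpos)
    show (∫ t in (0:ℝ)..1, J s t * U t) - s * S < 0
    nlinarith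
  -- positivity for a large parameter
  have hc₄pos : 0 < c₄ := lt_trans (by positivity) hc₄
  have hpos : 0 < P (x₀ / (c₁ * M)) := by
    have hs : 0 < x₀ / (c₁ * M) := by positivity
    have hsM : x₀ / (c₁ * M) * (c₁ * M) = x₀ := by field_simp
    generalize x₀ / (c₁ * M) = s at hs hsM
    have hcM : 0 < c₁ * M := by positivity
    have hL : Continuous (fun t => ∫ θ in a..b, K t θ) :=
      intervalIntegral.continuous_parametric_intervalIntegral_of_continuous' hK a b
    have hJge : ∀ t, c₄ * (s * (c₁ * M)) * (∫ θ in a..b, K t θ) ≤ J s t := by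
      intro t
      have h1 : ∫ θ in a..b, K t θ * f (s * U θ) (V θ) ≤ J s t := by
        rw [hJ]
        refine intervalIntegral.integral_mono_interval ha hab hb ?_
          ((hKft s t).intervalIntegrable _ _)
        exact Filter.Eventually.of_forall fun θ =>
          mul_nonneg (K0 _ _) (hfnonneg _ (mul_nonneg hs.le (U0 _)) _)
      refine le_trans ?_ h1
      rw [← intervalIntegral.integral_const_mul]
      refine intervalIntegral.integral_mono_on hab
        (Continuous.intervalIntegrable (continuous_const.mul (hKt t)) _ _)
        ((hKft s t).intervalIntegrable _ _) fun θ hθ => ?_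
      have h2 : s * (c₁ * M) ≤ s * U θ := mul_le_mul_of_nonneg_left (Ul θ hθ) hs.le
      have h3 := hH3 (s * U θ) (by rw [← hsM]; exact h2) (V θ) (VR _)
      rw [mul_comm]
      refine mul_le_mul_of_nonneg_left (le_trans ?_ h3) (K0 _ _)
      exact mul_le_mul_of_nonneg_left h2 hc₄pos.le
    have hI : c₄ * (s * (c₁ * M)) * (c₁ * M) * α₂ ≤ ∫ t in (0:ℝ)..1, J s t * U t := by
      have h1 : ∫ t in a..b, J s t * U t ≤ ∫ t in (0:ℝ)..1, J s t * U t := by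
        refine intervalIntegral.integral_mono_interval ha hab hb ?_
          (((hJt s).mul hU).intervalIntegrable _ _)
        exact Filter.Eventually.of_forall fun θ => mul_nonneg (hJ0 s hs.le _) (U0 _)
      refine le_trans ?_ h1
      rw [hα₂, ← intervalIntegral.integral_const_mul]
      refine intervalIntegral.integral_mono_on hab
        (Continuous.intervalIntegrable (continuous_const.mul hL) _ _)
        (((hJt s).mul hU).intervalIntegrable _ _) fun t ht => ?_
      have := mul_le_mul (hJge t) (Ul t ht) hcM.le (hJ0 s hs.le _)
      linarith
    have hc : 1 < c₄ * (c₁ ^ 2 * α₂) := by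
      rwa [div_lt_iff₀ (by positivity)] at hc₄
    rw [hP]
    show 0 < (∫ t in (0:ℝ)..1, J s t * U t) - s * S
    have h2 : 0 < (c₄ * (c₁ ^ 2 * α₂) - 1) * (s * M ^ 2) :=
      mul_pos (by linarith) (by positivity)
    have h3 : s * S ≤ s * M ^ 2 := mul_le_mul_of_nonneg_left hSM hs.le
    nlinarith
  -- a point where K is positive
  obtain ⟨t₀, ht₀, θ₀, hθ₀, hk⟩ : ∃ t ∈ Set.Icc a b, ∃ θ ∈ Set.Icc a b, 0 < K t θ := by
    by_contra! hcon
    have : α₂ = ∫ t in a..b, ∫ θ in a..b, (0:ℝ) := by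
      rw [hα₂]
      refine intervalIntegral.integral_congr fun t ht => ?_
      rw [Set.uIcc_of_le hab] at ht
      refine intervalIntegral.integral_congr fun θ hθ => ?_
      rw [Set.uIcc_of_le hab] at hθ
      exact le_antisymm (hcon t ht θ hθ) (K0 t θ)
    simp at this
    linarith
  have hUpos : ∀ t ∈ Set.Icc a b, 0 < U t := fun t ht =>
    lt_of_lt_of_le (mul_pos hc₁pos hM) (Ul t ht)
  have hsub : Set.Icc a b ⊆ Set.Icc 0 1 := Set.Icc_subset_Icc ha hb
  -- strict monotonicity
  have hlt : ∀ s r, 0 < s → s < r → ∀ θ, 0 < U θ →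
      r * f (s * U θ) (V θ) < s * f (r * U θ) (V θ) := by
    intro s r hs hsr θ hu
    have hr := hs.trans hsr
    have h := hH4 (V θ) (VR θ) (Set.mem_Ioi.2 (mul_pos hs hu)) (Set.mem_Ioi.2 (mul_pos hr hu))
      (mul_lt_mul_of_pos_right hsr hu)
    simp only at h
    rw [div_lt_div_iff₀ (mul_pos hs hu) (mul_pos hr hu)] at h
    refine lt_of_mul_lt_mul_right ?_ hu.le
    linarith
  have hle : ∀ s r, 0 < s → s < r → ∀ θ,
      r * f (s * U θ) (V θ) ≤ s * f (r * U θ) (V θ) := by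
    intro s r hs hsr θ
    rcases (U0 θ).eq_or_lt with h | h
    · have h1 := hH2 0 le_rfl hδ₀.le (V θ) (VR θ)
      have h2 := hfnonneg 0 le_rfl (V θ)
      have h3 : f 0 (V θ) = 0 := by linarith
      simp [← h, h3]
    · exact (hlt s r hs hsr θ h).le
  have hmono : ∀ s r, 0 < s → s < r → r * P s < s * P r := by
    intro s r hs hsr
    have hq : ∀ q p t : ℝ, Continuous (fun θ => q * (K t θ * f (p * U θ) (V θ))) :=
      fun q p t => continuous_const.mul (hKft p t)
    have hJd : ∀ t, s * J r t - r * J s t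
        = ∫ θ in (0:ℝ)..1, K t θ * (s * f (r * U θ) (V θ) - r * f (s * U θ) (V θ)) := by
      intro t
      rw [hJ]
      simp only
      rw [← intervalIntegral.integral_const_mul, ← intervalIntegral.integral_const_mul,
        ← intervalIntegral.integral_sub
          ((hq s r t).intervalIntegrable _ _)
          ((hq r s t).intervalIntegrable _ _)]
      congr 1
      ext θ
      ring
    have hcont : ∀ t, Continuous
        (fun θ => K t θ * (s * f (r * U θ) (V θ) - r * f (s * U θ) (V θ))) := by
      intro t
      have := (hq s r t).sub (hq r s t)
      refine this.congr fun θ => ?_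
      simp only [Pi.sub_apply]
      ring
    have hd0 : ∀ t, 0 ≤ s * J r t - r * J s t := by
      intro t
      rw [hJd]
      exact intervalIntegral.integral_nonneg h01 fun θ _ =>
        mul_nonneg (K0 _ _) (sub_nonneg.2 (hle s r hs hsr θ))
    have hd1 : 0 < s * J r t₀ - r * J s t₀ := by
      rw [hJd]
      refine intervalIntegral.integral_pos one_pos (hcont t₀).continuousOn
        (fun θ _ => mul_nonneg (K0 _ _) (sub_nonneg.2 (hle s r hs hsr θ)))
        ⟨θ₀, hsub hθ₀, mul_pos hk (sub_pos.2 (hlt s r hs hsr θ₀ (hUpos _ hθ₀)))⟩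
    have i1 := hJt s
    have i2 := hJt r
    have hI : 0 < ∫ t in (0:ℝ)..1, (s * J r t - r * J s t) * U t := by
      refine intervalIntegral.integral_pos one_pos (by fun_prop)
        (fun t _ => mul_nonneg (hd0 t) (U0 t))
        ⟨t₀, hsub ht₀, mul_pos hd1 (hUpos _ ht₀)⟩
    have e : ∫ t in (0:ℝ)..1, (s * J r t - r * J s t) * U t
        = s * (∫ t in (0:ℝ)..1, J r t * U t) - r * ∫ t in (0:ℝ)..1, J s t * U t := by
      rw [← intervalIntegral.integral_const_mul, ← intervalIntegral.integral_const_mul,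
        ← intervalIntegral.integral_sub
          (Continuous.intervalIntegrable (by fun_prop) _ _)
          (Continuous.intervalIntegrable (by fun_prop) _ _)]
      congr 1
      ext θ
      ring
    rw [e] at hI
    rw [hP]
    simp only
    linarith
  have hz : ∀ σ, 0 < σ → nehariF K f U V σ = 0 → P σ = 0 := by
    intro σ hσ h
    rw [hN] at h
    exact (mul_eq_zero.1 h).resolve_left hσ.ne'
  obtain ⟨σ, hσ, hσ0⟩ : ∃ σ, 0 < σ ∧ P σ = 0 := by
    have := (isPreconnected_Ioi (a := (0:ℝ))).intermediate_value
      (Set.mem_Ioi.2 (div_pos hδ₀ hM))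
      (Set.mem_Ioi.2 (div_pos hx₀ (mul_pos hc₁pos hM))) hPc.continuousOn
    obtain ⟨σ, h1, h2⟩ := this ⟨hneg.le, hpos.le⟩
    exact ⟨σ, h1, h2⟩
  refine ⟨σ, ⟨hσ, by rw [hN, hσ0, mul_zero]⟩, ?_⟩
  rintro τ ⟨hτ, hτ0⟩
  have hτP := hz τ hτ hτ0
  rcases lt_trichotomy τ σ with h | h | h
  · have := hmono τ σ hτ h
    simp [hτP, hσ0] at this
  · exact h
  · have := hmono σ τ hσ h
    simp [hτP, hσ0] at this

theorem exists_unique_sigma_star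
    -- k₁ is a nonnegative continuous function on [0,1]²
    (k₁ : ℝ → ℝ → ℝ)
    (hk₁cont : ContinuousOn (fun p : ℝ × ℝ => k₁ p.1 p.2)
      (Set.Icc 0 1 ×ˢ Set.Icc 0 1))
    (hk₁nonneg : ∀ t ∈ Set.Icc (0:ℝ) 1, ∀ θ ∈ Set.Icc (0:ℝ) 1, 0 ≤ k₁ t θ)
    -- f is continuous with f(x,y) ≥ 0 for x ≥ 0
    (f : ℝ → ℝ → ℝ) (hfcont : Continuous (fun p : ℝ × ℝ => f p.1 p.2))
    (hfnonneg : ∀ x : ℝ, 0 ≤ x → ∀ y : ℝ, 0 ≤ f x y)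
    (R : ℝ) (hR : 0 < R)
    -- condition (H1)
    (Φ : ℝ → ℝ) (hΦcont : ContinuousOn Φ (Set.Icc 0 1))
    (hΦnonneg : ∀ θ ∈ Set.Icc (0:ℝ) 1, 0 ≤ Φ θ)
    (a b : ℝ) (ha : 0 ≤ a) (hab : a ≤ b) (hb : b ≤ 1)
    (c₁ : ℝ) (hc₁pos : 0 < c₁) (hc₁le : c₁ ≤ 1)
    (hk₁upper : ∀ t ∈ Set.Icc (0:ℝ) 1, ∀ θ ∈ Set.Icc (0:ℝ) 1, k₁ t θ ≤ Φ θ)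
    (hk₁lower : ∀ t ∈ Set.Icc a b, ∀ θ ∈ Set.Icc (0:ℝ) 1, c₁ * Φ θ ≤ k₁ t θ)
    -- α₁ := max_{t∈[0,1]} Φ(t) > 0 and α₂ := ∫ₐᵇ∫ₐᵇ k₁(t,θ) dθ dt > 0
    (α₁ : ℝ) (hα₁ : IsGreatest (Φ '' Set.Icc (0:ℝ) 1) α₁) (hα₁pos : 0 < α₁)
    (α₂ : ℝ) (hα₂ : α₂ = ∫ t in a..b, ∫ θ in a..b, k₁ t θ) (hα₂pos : 0 < α₂)
    -- quantitative form of (H2)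
    (c₂ : ℝ) (hc₂pos : 0 < c₂) (hc₂lt : c₂ < 1 / α₁)
    (δ₀ : ℝ) (hδ₀ : 0 < δ₀)
    (hH2 : ∀ x : ℝ, 0 ≤ x → x ≤ δ₀ → ∀ y : ℝ, |y| ≤ R → f x y ≤ c₂ * x)
    -- quantitative form of (H3)
    (c₄ : ℝ) (hc₄ : 1 / (c₁ ^ 2 * α₂) < c₄)
    (x₀ : ℝ) (hx₀ : 0 < x₀)
    (hH3 : ∀ x : ℝ, x₀ ≤ x → ∀ y : ℝ, |y| ≤ R → c₄ * x ≤ f x y)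
    -- condition (H4)
    (hH4 : ∀ y : ℝ, |y| ≤ R → StrictMonoOn (fun x => f x y / x) (Set.Ioi (0:ℝ))) :
    ∀ u v : ℝ → ℝ, memK₁ a b c₁ u → (∃ t ∈ Set.Icc (0:ℝ) 1, u t ≠ 0) →
      ContinuousOn v (Set.Icc 0 1) → (∀ t ∈ Set.Icc (0:ℝ) 1, |v t| ≤ R) →
      ∃! σ : ℝ, 0 < σ ∧ nehariF k₁ f u v σ = 0 := by
  intro u v hu hne hv hvR
  obtain ⟨huc, hu0, hul⟩ := hu
  have h01 : (0:ℝ) ≤ 1 := zero_le_one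
  obtain ⟨π, hπ⟩ : ∃ π : ℝ → ℝ, π = fun t => (Set.projIcc (0:ℝ) 1 h01 t : ℝ) := ⟨_, rfl⟩
  have hπc : Continuous π := by
    rw [hπ]; exact continuous_subtype_val.comp continuous_projIcc
  have hπm : ∀ t, π t ∈ Set.Icc (0:ℝ) 1 := fun t => by
    rw [hπ]; exact (Set.projIcc (0:ℝ) 1 h01 t).2
  have hπe : ∀ t ∈ Set.Icc (0:ℝ) 1, π t = t := fun t ht => by
    rw [hπ]; simp [Set.projIcc_of_mem h01 ht]
  have hsub : Set.Icc a b ⊆ Set.Icc 0 1 := Set.Icc_subset_Icc ha hb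
  have hbdd : BddAbove ((fun t => |u t|) '' Set.Icc (0:ℝ) 1) :=
    (isCompact_Icc.image_of_continuousOn huc.abs).bddAbove
  have hUM : ∀ t ∈ Set.Icc (0:ℝ) 1, |u t| ≤ supNorm u := fun t ht =>
    le_csSup hbdd ⟨t, ht, rfl⟩
  have hM : 0 < supNorm u := by
    obtain ⟨t, ht, h⟩ := hne
    exact lt_of_lt_of_le (abs_pos.2 h) (hUM t ht)
  have key := core_sigma (fun t θ => k₁ (π t) (π θ))
    (hk₁cont.comp_continuous (f := fun p : ℝ × ℝ => (π p.1, π p.2)) (by fun_prop)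
      fun p => ⟨hπm _, hπm _⟩)
    (fun t θ => hk₁nonneg _ (hπm _) _ (hπm _)) α₁ hα₁pos
    (fun t θ => (hk₁upper _ (hπm _) _ (hπm _)).trans (hα₁.2 ⟨_, hπm _, rfl⟩))
    f hfcont hfnonneg R a b ha hab hb c₁ hc₁pos α₂
    (by
      rw [hα₂]
      refine intervalIntegral.integral_congr fun t ht => ?_
      rw [Set.uIcc_of_le hab] at ht
      refine intervalIntegral.integral_congr fun θ hθ => ?_
      rw [Set.uIcc_of_le hab] at hθ
      rw [hπe _ (hsub ht), hπe _ (hsub hθ)])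
    hα₂pos c₂ hc₂pos hc₂lt δ₀ hδ₀ hH2 c₄ hc₄ x₀ hx₀ hH3 hH4
    (fun t => u (π t)) (fun t => v (π t))
    (huc.comp_continuous hπc hπm) (hv.comp_continuous hπc hπm)
    (fun t => hu0 _ (hπm _)) (supNorm u) hM
    (fun t => (le_abs_self _).trans (hUM _ (hπm _)))
    (fun t ht => by
      rw [hπe _ (hsub ht)]
      exact hul t ht)
    (fun t => hvR _ (hπm _))
  have e : ∀ σ, nehariF (fun t θ => k₁ (π t) (π θ)) f (fun t => u (π t)) (fun t => v (π t)) σ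
      = nehariF k₁ f u v σ := by
    intro σ
    unfold nehariF
    refine intervalIntegral.integral_congr fun t ht => ?_
    rw [Set.uIcc_of_le h01] at ht
    simp only
    rw [hπe _ ht]
    congr 2
    refine intervalIntegral.integral_congr fun θ hθ => ?_
    rw [Set.uIcc_of_le h01] at hθ
    rw [hπe _ hθ]
  simpa only [e] using key
end
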